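/- Let f₁, …, f_n ∈ L¹(ℝ²) be a finite family of filters such that for every ω ∈ ℝ², Σ_{k=1}^{n} |𝓕f_k(ω)|² > 0. If x, y ∈ L¹(ℝ²) satisfy σ(γ · (x ∗ f_k)(u)) = σ(γ · (y ∗ f_k)(u)) for almost every u ∈ ℝ², for every k and both γ ∈ {−1, +1}, then x = y almost everywhere. That is, the one-layer nonlinear operator U¹x = {σ(γ · x ∗ f_k) : γ = ±1, 1 ≤ k ≤ n} is invertible. -/

import Mathlib

open MeasureTheory
open scoped RealInnerProductSpace

/-- The Fourier transform on `ℝ²` with convention `𝓕f(ω) = ∫ f(u) e^{−i⟨u,ω⟩} du`. -/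
noncomputable def fourier2 (f : EuclideanSpace ℝ (Fin 2) → ℝ)
    (ω : EuclideanSpace ℝ (Fin 2)) : ℂ :=
  ∫ u : EuclideanSpace ℝ (Fin 2), (f u : ℂ) * Complex.exp (-Complex.I * (⟪u, ω⟫ : ℂ))

/-- Convolution on `ℝ²`: `(f ∗ g)(u) = ∫ f(u−t) g(t) dt`. -/
noncomputable def conv2 (f g : EuclideanSpace ℝ (Fin 2) → ℝ)
    (u : EuclideanSpace ℝ (Fin 2)) : ℝ :=
  ∫ t : EuclideanSpace ℝ (Fin 2), f (u - t) * g t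

/-- Relation with Mathlib's Fourier transform. -/
lemma fourier2_eq (h : EuclideanSpace ℝ (Fin 2) → ℝ) (ω : EuclideanSpace ℝ (Fin 2)) :
    fourier2 h ω = FourierTransform.fourier (fun u => (h u : ℂ)) ((2 * Real.pi)⁻¹ • ω) := by
  rw [Real.fourier_eq']
  unfold fourier2
  congr 1
  ext u
  rw [smul_eq_mul, mul_comm, inner_smul_right]
  congr 2
  have : (Real.pi : ℂ) ≠ 0 := by exact_mod_cast Real.pi_ne_zero
  push_cast
  field_simp

lemma fourier2_conv2 (x f : EuclideanSpace ℝ (Fin 2) → ℝ) (hx : Integrable x)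
    (hf : Integrable f) (ω : EuclideanSpace ℝ (Fin 2)) :
    fourier2 (conv2 x f) ω = fourier2 x ω * fourier2 f ω := by
  have hx1 : Integrable (fun u => (x u : ℂ)) := hx.ofReal
  have hf1 : Integrable (fun u => (f u : ℂ)) := hf.ofReal
  rw [fourier2_eq, fourier2_eq, fourier2_eq, ← Real.fourier_mul_convolution_eq hx1 hf1]
  refine congrArg (fun g : EuclideanSpace ℝ (Fin 2) → ℂ =>
    FourierTransform.fourier g ((2 * Real.pi)⁻¹ • ω)) ?_
  ext u
  rw [convolution_eq_swap]
  unfold conv2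
  rw [← integral_complex_ofReal]
  simp

lemma fourier2_congr {g h : EuclideanSpace ℝ (Fin 2) → ℝ} (e : g =ᵐ[volume] h)
    (ω : EuclideanSpace ℝ (Fin 2)) : fourier2 g ω = fourier2 h ω := by
  unfold fourier2
  apply integral_congr_ae
  filter_upwards [e] with u hu
  rw [hu]

lemma integrable_mul_exp {h : EuclideanSpace ℝ (Fin 2) → ℝ} (hh : Integrable h)
    (ω : EuclideanSpace ℝ (Fin 2)) :
    Integrable (fun u => (h u : ℂ) * Complex.exp (-Complex.I * (⟪u, ω⟫ : ℂ))) := by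
  apply hh.ofReal.mul_bdd (c := 1)
  · apply Continuous.aestronglyMeasurable
    fun_prop
  · refine Filter.Eventually.of_forall fun u => ?_
    rw [Complex.norm_exp]
    simp

lemma charFun_pos_part {h : EuclideanSpace ℝ (Fin 2) → ℝ} (hh : Integrable h)
    (t : EuclideanSpace ℝ (Fin 2)) :
    charFun (volume.withDensity fun u => ENNReal.ofReal (h u)) t =
      fourier2 (fun u => max (h u) 0) (-t) := by
  rw [charFun_apply, integral_withDensity_eq_integral_toReal_smul₀
    hh.aestronglyMeasurable.aemeasurable.ennreal_ofReal (by simp)]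
  unfold fourier2
  congr 1
  ext u
  rw [ENNReal.toReal_ofReal', Complex.real_smul, inner_neg_right]
  congr 2
  push_cast
  ring

lemma ae_eq_zero_of_fourier2 {h : EuclideanSpace ℝ (Fin 2) → ℝ} (hh : Integrable h)
    (h0 : ∀ ω, fourier2 h ω = 0) : ∀ᵐ u, h u = 0 := by
  have i1 := isFiniteMeasure_withDensity_ofReal hh.hasFiniteIntegral
  have i2 := isFiniteMeasure_withDensity_ofReal hh.neg.hasFiniteIntegral
  have key : (volume.withDensity fun u => ENNReal.ofReal (h u)) =
      volume.withDensity fun u => ENNReal.ofReal ((-h) u) := by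
    apply Measure.ext_of_charFun
    ext t
    rw [charFun_pos_part hh, charFun_pos_part hh.neg, ← sub_eq_zero, ← h0 (-t)]
    unfold fourier2
    rw [← integral_sub (integrable_mul_exp hh.pos_part _) (integrable_mul_exp hh.neg.pos_part _)]
    congr 1
    ext u
    rw [← sub_mul, ← Complex.ofReal_sub]
    congr 2
    simp only [Pi.neg_apply]
    rcases le_total (h u) 0 with h1 | h1
    · rw [max_eq_right h1, max_eq_left (by linarith)]; ring
    · rw [max_eq_left h1, max_eq_right (by linarith)]; ring
  rw [withDensity_eq_iff_of_sigmaFinite hh.aestronglyMeasurable.aemeasurable.ennreal_ofReal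
    hh.neg.aestronglyMeasurable.aemeasurable.ennreal_ofReal] at key
  filter_upwards [key] with u hu
  have := congrArg ENNReal.toReal hu
  rw [ENNReal.toReal_ofReal', ENNReal.toReal_ofReal', Pi.neg_apply] at this
  rcases le_total (h u) 0 with h1 | h1
  · rw [max_eq_right h1, max_eq_left (by linarith)] at this; linarith
  · rw [max_eq_left h1, max_eq_right (by linarith)] at this; linarith

/-- The one-layer nonlinear operator `U¹x = {σ(γ · x ∗ f_k) : γ = ±1, k}` built
from a filter bank whose Fourier transforms have no common zero is invertible. -/
theorem relu_layer_invertible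
    (n : ℕ) (f : Fin n → EuclideanSpace ℝ (Fin 2) → ℝ)
    (hf : ∀ k, Integrable (f k))
    (hframe : ∀ ω : EuclideanSpace ℝ (Fin 2), 0 < ∑ k, ‖fourier2 (f k) ω‖ ^ 2)
    (x y : EuclideanSpace ℝ (Fin 2) → ℝ)
    (hx : Integrable x) (hy : Integrable y)
    (heq : ∀ k, ∀ γ ∈ ({-1, 1} : Set ℝ), ∀ᵐ u : EuclideanSpace ℝ (Fin 2),
      max 0 (γ * conv2 x (f k) u) = max 0 (γ * conv2 y (f k) u)) :
    ∀ᵐ u : EuclideanSpace ℝ (Fin 2), x u = y u := by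
  have hc : ∀ k, conv2 x (f k) =ᵐ[volume] conv2 y (f k) := by
    intro k
    filter_upwards [heq k 1 (by simp), heq k (-1) (by simp)] with u h1 h2
    simp only [one_mul, neg_mul] at h1 h2
    rcases le_total (conv2 x (f k) u) 0 with a | a <;>
      rcases le_total (conv2 y (f k) u) 0 with b | b <;>
      simp only [max_def] at h1 h2 <;> split_ifs at h1 h2 <;> linarith
  have hd : ∀ᵐ u, (x - y) u = 0 := by
    apply ae_eq_zero_of_fourier2 (hx.sub hy)
    intro ω
    have hsub : fourier2 (x - y) ω = fourier2 x ω - fourier2 y ω := by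
      unfold fourier2
      rw [← integral_sub (integrable_mul_exp hx _) (integrable_mul_exp hy _)]
      congr 1
      ext u
      simp only [Pi.sub_apply]
      push_cast
      ring
    obtain ⟨k, -, hk⟩ := Finset.exists_ne_zero_of_sum_ne_zero (hframe ω).ne'
    have hk' : fourier2 (f k) ω ≠ 0 := by
      intro h
      simp [h] at hk
    have e := fourier2_congr (hc k) ω
    rw [fourier2_conv2 _ _ hx (hf k), fourier2_conv2 _ _ hy (hf k)] at e
    rw [hsub, mul_right_cancel₀ hk' e, sub_self]
  filter_upwards [hd] with u hu
  exact sub_eq_zero.mp hu
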